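/- Let G be a hyperrigid subset of a unital C*-algebra A. Let π : A → B(H) and ρ : A → B(K) be representations on separable complex Hilbert spaces, and let R ∈ B(H,K) be a non-isometric contraction such that π(g) = R*ρ(g)R for all g ∈ G. Then the following are equivalent: (i) G is rigid at 0 in A; (ii) there is no character of A vanishing on G. Moreover, there exists at most one state φ on A with G ⊆ ker φ, and if such a state exists then it is a character of A. -/

import Mathlib

/-!
The key point is that a state `φ` vanishing on `G` determines the decomposition
`π(a) = R* ρ(a) R + φ(a) (1 - R* R)` for every `a` in `A` (`Hyperrigid.eq_add_smul`). On `G` this is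
the hypothesis on `R`. To pass to `A`, choose a faithful separable representation `τ` that contains
`ρ` and in which `φ` is a vector state (`exists_faithful_containing`). The right-hand side is then
a function of `τ(a)`, and it gives a unital completely positive map on `B(H ⊕ M)`, where `M` is the
space of `τ`, that fixes `π(g) ⊕ τ(g)` for `g` in `G`; hyperrigidity for the constant sequence
yields the identity on all of `A` (`Hyperrigid.eq_of_eqOn`).

Since `1 - R* R ≠ 0`, the decomposition determines `φ`, which gives uniqueness. If `φ(b) = 0`, then
comparing `π(b* b) = R* ρ(b* b) R + φ(b* b) (1 - R* R)` with
`π(b)* π(b) = R* ρ(b)* R R* ρ(b) R ≤ R* ρ(b* b) R` at a vector `h` with `‖R h‖ < ‖h‖` gives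
`φ(b* b) = 0`; hence `φ` is a character (`Hyperrigid.isCharacterLF`).

If rigidity at zero fails, an ultrafilter limit of the offending functionals, suitably scaled, is a
state vanishing on `G` (`exists_state_of_not_rigidAtZero`), hence a character. Conversely a
character vanishing on `G`, as a constant sequence, violates rigidity at zero
(`IsCharacterLF.not_rigidAtZero`).

The faithful separable representation is the GNS representation of a faithful positive functional;
such a functional exists because `A` is separable (`exists_faithful_positive`).
-/

open scoped ComplexOrder
open Filter Topology ContinuousLinearMap

noncomputable section

/-- An element of a star ring is *positive* (in the C*-algebra sense) iff it factors as
`star y * y`. -/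
def IsPosElem {R : Type*} [Mul R] [Star R] (x : R) : Prop := ∃ y, x = star y * y

/-- A linear map between star rings is *completely positive* if each of its matrix
amplifications preserves positivity. -/
def IsCompletelyPositive {A B : Type*} [NonUnitalNonAssocSemiring A] [StarRing A]
    [NonUnitalNonAssocSemiring B] [StarRing B] (Φ : A → B) : Prop :=
  ∀ (n : ℕ) (M : Matrix (Fin n) (Fin n) A), IsPosElem M → IsPosElem (M.map Φ)

/-- A bundled separable complex Hilbert space. -/
structure SepHilbertSpace : Type 1 where
  carrier : Type
  [ng : NormedAddCommGroup carrier]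
  [ip : InnerProductSpace ℂ carrier]
  [cs : CompleteSpace carrier]
  [sep : TopologicalSpace.SeparableSpace carrier]

attribute [instance] SepHilbertSpace.ng SepHilbertSpace.ip SepHilbertSpace.cs
  SepHilbertSpace.sep

section Defs

variable {A : Type*} [CStarAlgebra A]

/-- A state on a unital C*-algebra: a positive linear functional sending the unit to `1`. -/
def IsStateLF (φ : A →ₗ[ℂ] ℂ) : Prop := φ 1 = 1 ∧ ∀ a : A, 0 ≤ φ (star a * a)

/-- A character of a unital C*-algebra: a nonzero multiplicative linear functional. -/
def IsCharacterLF (χ : A →ₗ[ℂ] ℂ) : Prop := χ ≠ 0 ∧ ∀ a b : A, χ (a * b) = χ a * χ b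

/-- Arveson's hyperrigidity for a countable generating subset `G` of a unital C*-algebra. -/
def Hyperrigid (G : Set A) : Prop :=
  G.Countable ∧ (StarAlgebra.adjoin ℂ G).topologicalClosure = ⊤ ∧
    ∀ (Hs : SepHilbertSpace) (π : A →⋆ₐ[ℂ] (Hs.carrier →L[ℂ] Hs.carrier)),
      Function.Injective π →
      ∀ Φ : ℕ → ((Hs.carrier →L[ℂ] Hs.carrier) →ₗ[ℂ] (Hs.carrier →L[ℂ] Hs.carrier)),
        (∀ k, IsCompletelyPositive (Φ k) ∧ Φ k 1 = 1) →
        (∀ g ∈ G, Tendsto (fun k => ‖Φ k (π g) - π g‖) atTop (nhds 0)) →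
        ∀ a : A, Tendsto (fun k => ‖Φ k (π a) - π a‖) atTop (nhds 0)

/-- Salomon's rigidity at `0`: sequences of contractive positive functionals vanishing
along `G` vanish everywhere. -/
def RigidAtZero (G : Set A) : Prop :=
  ∀ ψ : ℕ → (A →ₗ[ℂ] ℂ),
    (∀ n, (∀ a : A, ‖ψ n a‖ ≤ ‖a‖) ∧ ∀ a : A, 0 ≤ ψ n (star a * a)) →
    (∀ g ∈ G, Tendsto (fun n => ψ n g) atTop (nhds (0 : ℂ))) →
    ∀ a : A, Tendsto (fun n => ψ n a) atTop (nhds (0 : ℂ))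

/-- A subset of a C*-algebra which is a two-sided ideal (a linear subspace closed under
multiplication by arbitrary algebra elements on both sides). -/
def IsTwoSidedIdealSet (J : Set A) : Prop :=
  (0 : A) ∈ J ∧ (∀ x ∈ J, ∀ y ∈ J, x + y ∈ J) ∧ (∀ (c : ℂ), ∀ x ∈ J, c • x ∈ J) ∧
    ∀ x ∈ J, ∀ b : A, b * x ∈ J ∧ x * b ∈ J

end Defs

section Decomp

variable {A : Type*} [CStarAlgebra A]
variable {H K : Type} [NormedAddCommGroup H] [InnerProductSpace ℂ H] [CompleteSpace H]
  [NormedAddCommGroup K] [InnerProductSpace ℂ K] [CompleteSpace K]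

/-- `(π, ρ, R)` has an isometric `χ`-decomposition relative to `(H₀, H₁, K₀, K₁)`. -/
def HasIsometricChiDecompositionRel (π : A →⋆ₐ[ℂ] (H →L[ℂ] H)) (ρ : A →⋆ₐ[ℂ] (K →L[ℂ] K))
    (R : H →L[ℂ] K) (χ : A →ₗ[ℂ] ℂ)
    (H₀ H₁ : Submodule ℂ H) (K₀ K₁ : Submodule ℂ K) : Prop :=
  H₁ = H₀ᗮ ∧ H₀ = H₁ᗮ ∧ K₁ = K₀ᗮ ∧ K₀ = K₁ᗮ ∧
  (∀ a : A, ∀ x ∈ H₀, π a x ∈ H₀) ∧ (∀ a : A, ∀ x ∈ H₁, π a x ∈ H₁) ∧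
  (∀ a : A, ∀ y ∈ K₀, ρ a y ∈ K₀) ∧ (∀ a : A, ∀ y ∈ K₁, ρ a y ∈ K₁) ∧
  (∀ a : A, ∀ x ∈ H₁, π a x = χ a • x) ∧ (∀ a : A, ∀ y ∈ K₁, ρ a y = χ a • y) ∧
  (∀ x ∈ H₀, R x ∈ K₀) ∧ (∀ x ∈ H₁, R x ∈ K₁) ∧
  (∀ x ∈ H₀, ‖R x‖ = ‖x‖) ∧
  (∀ a : A, ∀ x ∈ H₀, π a x = adjoint R (ρ a (R x)))

/-- `(π, ρ, R)` has a unitary `χ`-decomposition relative to `(H₀, H₁, K₀, K₁)`: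
an isometric one whose isometric part is moreover onto. -/
def HasUnitaryChiDecompositionRel (π : A →⋆ₐ[ℂ] (H →L[ℂ] H)) (ρ : A →⋆ₐ[ℂ] (K →L[ℂ] K))
    (R : H →L[ℂ] K) (χ : A →ₗ[ℂ] ℂ)
    (H₀ H₁ : Submodule ℂ H) (K₀ K₁ : Submodule ℂ K) : Prop :=
  HasIsometricChiDecompositionRel π ρ R χ H₀ H₁ K₀ K₁ ∧ ∀ y ∈ K₀, ∃ x ∈ H₀, R x = y

/-- `(π, ρ, R)` has an isometric `χ`-decomposition. -/
def HasIsometricChiDecomposition (π : A →⋆ₐ[ℂ] (H →L[ℂ] H)) (ρ : A →⋆ₐ[ℂ] (K →L[ℂ] K))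
    (R : H →L[ℂ] K) (χ : A →ₗ[ℂ] ℂ) : Prop :=
  ∃ (H₀ H₁ : Submodule ℂ H) (K₀ K₁ : Submodule ℂ K),
    HasIsometricChiDecompositionRel π ρ R χ H₀ H₁ K₀ K₁

/-- `(π, ρ, R)` has a unitary `χ`-decomposition. -/
def HasUnitaryChiDecomposition (π : A →⋆ₐ[ℂ] (H →L[ℂ] H)) (ρ : A →⋆ₐ[ℂ] (K →L[ℂ] K))
    (R : H →L[ℂ] K) (χ : A →ₗ[ℂ] ℂ) : Prop :=
  ∃ (H₀ H₁ : Submodule ℂ H) (K₀ K₁ : Submodule ℂ K),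
    HasUnitaryChiDecompositionRel π ρ R χ H₀ H₁ K₀ K₁

end Decomp

/-- Continuous functional calculus `f(T)` of a normal operator `T` with spectrum contained
in a compact set `X ⊆ ℂ`, applied to `f ∈ C(X, ℂ)`. -/
def cfcOnSet {H : Type} [NormedAddCommGroup H] [InnerProductSpace ℂ H] [CompleteSpace H]
    (T : H →L[ℂ] H) (hT : IsStarNormal T) {X : Set ℂ} (hX : spectrum ℂ T ⊆ X)
    (f : C(X, ℂ)) : H →L[ℂ] H :=
  cfcHom hT (f.comp ⟨Set.inclusion hX, continuous_inclusion hX⟩)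

/-! ### Completely positive maps -/

theorem IsPosElem.add {B : Type*} [CStarAlgebra B] {x y : B} (hx : IsPosElem x)
    (hy : IsPosElem y) : IsPosElem (x + y) := by
  let := CStarAlgebra.spectralOrder B
  have := CStarAlgebra.spectralOrderedRing B
  obtain ⟨u, rfl⟩ := hx
  obtain ⟨v, rfl⟩ := hy
  exact CStarAlgebra.nonneg_iff_eq_star_mul_self.mp
    (add_nonneg (star_mul_self_nonneg u) (star_mul_self_nonneg v))

theorem IsPosElem.matrix_add {B : Type*} [CStarAlgebra B] {n : ℕ} {M N : Matrix (Fin n) (Fin n) B}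
    (hM : IsPosElem M) (hN : IsPosElem N) : IsPosElem (M + N) := by
  -- The C*-algebra instance on `CStarMatrix` asks for an order on the entries.
  let := CStarAlgebra.spectralOrder B
  have := CStarAlgebra.spectralOrderedRing B
  exact IsPosElem.add (B := CStarMatrix (Fin n) (Fin n) B) hM hN

theorem IsCompletelyPositive.add {A B : Type*} [NonUnitalNonAssocSemiring A] [StarRing A]
    [CStarAlgebra B] {Φ Ψ : A → B} (hΦ : IsCompletelyPositive Φ) (hΨ : IsCompletelyPositive Ψ) :
    IsCompletelyPositive (Φ + Ψ) := by
  intro n M hM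
  exact (hΦ n M hM).matrix_add (hΨ n M hM)

theorem isCompletelyPositive_conj {B : Type*} [Ring B] [StarRing B] (v : B) :
    IsCompletelyPositive (fun x : B => star v * x * v) := by
  rintro n _ ⟨y, rfl⟩
  refine ⟨y.map (· * v), ?_⟩
  ext i j
  simp [Matrix.mul_apply, Matrix.star_apply, Finset.mul_sum, Finset.sum_mul, mul_assoc]

/-- A vector functional times a fixed positive operator is completely positive: the amplified
functional turns `y* y` into a sum of Gram matrices, and a positive semidefinite scalar matrix
has the form `b* b`. -/
theorem isCompletelyPositive_vector {X : Type*} [NormedAddCommGroup X] [InnerProductSpace ℂ X]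
    [CompleteSpace X] (ξ : X) (c : X →L[ℂ] X) :
    IsCompletelyPositive (fun T : X →L[ℂ] X => inner ℂ ξ (T ξ) • (star c * c)) := by
  rintro n _ ⟨y, rfl⟩
  have hpos : (∑ k, Matrix.gram ℂ (fun i => y k i ξ)).PosSemidef :=
    Matrix.posSemidef_sum _ fun k _ => Matrix.posSemidef_gram ℂ _
  obtain ⟨b, hb⟩ : ∃ b : Matrix (Fin n) (Fin n) ℂ,
      ∑ k, Matrix.gram ℂ (fun i => y k i ξ) = star b * b := by
    open scoped MatrixOrder Matrix.Norms.L2Operator in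
    exact CStarAlgebra.nonneg_iff_eq_star_mul_self.mp hpos.nonneg
  refine ⟨b.map (· • c), ?_⟩
  ext1 i j
  have hij := congrFun (congrFun hb i) j
  simp only [Matrix.sum_apply, Matrix.gram_apply, Matrix.mul_apply, Matrix.star_apply] at hij
  simp only [Matrix.map_apply, Matrix.mul_apply, Matrix.star_apply, star_smul, smul_mul_smul_comm,
    ← Finset.sum_smul, ← hij]
  congr 1
  simp [star_eq_adjoint, adjoint_inner_right]

/-! ### Direct sums of representations -/

/-- The direct sum `X ⊕ Y`, recorded only through its inclusions: complementary isometries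
`i`, `j` with `i i* + j j* = 1`. -/
theorem exists_directSum (X Y : Type) [NormedAddCommGroup X] [InnerProductSpace ℂ X]
    [CompleteSpace X] [TopologicalSpace.SeparableSpace X]
    [NormedAddCommGroup Y] [InnerProductSpace ℂ Y]
    [CompleteSpace Y] [TopologicalSpace.SeparableSpace Y] :
    ∃ (Z : SepHilbertSpace) (i : X →L[ℂ] Z.carrier) (j : Y →L[ℂ] Z.carrier),
      adjoint i ∘L i = 1 ∧ adjoint j ∘L j = 1 ∧ adjoint i ∘L j = 0 ∧ adjoint j ∘L i = 0 ∧
      i ∘L adjoint i + j ∘L adjoint j = 1 := by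
  let e := (WithLp.prodContinuousLinearEquiv 2 ℂ X Y)
  have : TopologicalSpace.SeparableSpace (WithLp 2 (X × Y)) :=
    e.symm.surjective.denseRange.separableSpace e.symm.continuous
  let i : X →L[ℂ] WithLp 2 (X × Y) := e.symm.toContinuousLinearMap ∘L ContinuousLinearMap.inl ℂ X Y
  let j : Y →L[ℂ] WithLp 2 (X × Y) := e.symm.toContinuousLinearMap ∘L ContinuousLinearMap.inr ℂ X Y
  have hi : adjoint i = ContinuousLinearMap.fst ℂ X Y ∘L e.toContinuousLinearMap := by
    symm
    rw [eq_adjoint_iff]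
    intro x y
    simp [i, e, WithLp.prod_inner_apply]
  have hj : adjoint j = ContinuousLinearMap.snd ℂ X Y ∘L e.toContinuousLinearMap := by
    symm
    rw [eq_adjoint_iff]
    intro x y
    simp [j, e, WithLp.prod_inner_apply]
  refine ⟨⟨WithLp 2 (X × Y)⟩, i, j, ?_, ?_, ?_, ?_, ?_⟩
  · change adjoint i ∘L i = 1
    rw [hi]; ext x; simp [i, e]
  · change adjoint j ∘L j = 1
    rw [hj]; ext x; simp [j, e]
  · change adjoint i ∘L j = 0
    rw [hi]; ext x; simp [j, e]
  · change adjoint j ∘L i = 0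
    rw [hj]; ext x; simp [i, e]
  · change i ∘L adjoint i + j ∘L adjoint j = 1
    rw [hi, hj]
    ext x
    apply e.injective
    simp [i, j, e, Prod.ext_iff]

/-- The representation `σ ⊕ τ` in the coordinates given by a pair of complementary isometries
`i`, `j`. -/
theorem exists_directSum_rep {A : Type*} [CStarAlgebra A] {X Y Z : Type}
    [NormedAddCommGroup X] [InnerProductSpace ℂ X] [CompleteSpace X]
    [NormedAddCommGroup Y] [InnerProductSpace ℂ Y] [CompleteSpace Y]
    [NormedAddCommGroup Z] [InnerProductSpace ℂ Z] [CompleteSpace Z]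
    {i : X →L[ℂ] Z} {j : Y →L[ℂ] Z}
    (hii : adjoint i ∘L i = 1) (hjj : adjoint j ∘L j = 1) (hij : adjoint i ∘L j = 0)
    (hji : adjoint j ∘L i = 0) (hsum : i ∘L adjoint i + j ∘L adjoint j = 1)
    (σ : A →⋆ₐ[ℂ] (X →L[ℂ] X)) (τ : A →⋆ₐ[ℂ] (Y →L[ℂ] Y)) :
    ∃ ζ : A →⋆ₐ[ℂ] (Z →L[ℂ] Z),
      ∀ a, ζ a = i ∘L σ a ∘L adjoint i + j ∘L τ a ∘L adjoint j := by
  have hii' (x) : adjoint i (i x) = x := congrArg (· x) hii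
  have hjj' (x) : adjoint j (j x) = x := congrArg (· x) hjj
  have hij' (x) : adjoint i (j x) = 0 := congrArg (· x) hij
  have hji' (x) : adjoint j (i x) = 0 := congrArg (· x) hji
  have hsum' (x) : i (adjoint i x) + j (adjoint j x) = x := congrArg (· x) hsum
  refine ⟨StarAlgHom.mk (AlgHom.ofLinearMap
    { toFun := fun a => i ∘L σ a ∘L adjoint i + j ∘L τ a ∘L adjoint j
      map_add' := fun a b => ?_
      map_smul' := fun c a => ?_ } ?_ ?_) ?_, fun a => rfl⟩
  · ext x; simp; abel
  · ext x; simp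
  · ext x; simp [hsum']
  · intro a b; ext x; simp [hii', hjj', hij', hji']
  · intro a
    change i ∘L σ (star a) ∘L adjoint i + j ∘L τ (star a) ∘L adjoint j =
      star (i ∘L σ a ∘L adjoint i + j ∘L τ a ∘L adjoint j)
    simp [star_eq_adjoint, map_star, adjoint_comp, ContinuousLinearMap.comp_assoc]

/-! ### The consequence of hyperrigidity -/

/-- The map `a ↦ S* τ(a) S + ⟨ξ, τ(a) ξ⟩ C* C` depends on `a` only through `τ(a)`. Hence there is a
unital completely positive map `Ψ` on `B(H ⊕ M)` sending `π(a) ⊕ τ(a)` to the direct sum of this map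
at `a` and `τ(a)`. Hyperrigidity, for the faithful representation `π ⊕ τ` and the constant
sequence `Ψ`, extends the agreement with `π` from `G` to `A`. -/
theorem Hyperrigid.eq_of_eqOn {A : Type*} [CStarAlgebra A] {G : Set A} (hG : Hyperrigid G)
    {H M : Type} [NormedAddCommGroup H] [InnerProductSpace ℂ H] [CompleteSpace H]
    [TopologicalSpace.SeparableSpace H]
    [NormedAddCommGroup M] [InnerProductSpace ℂ M] [CompleteSpace M]
    [TopologicalSpace.SeparableSpace M]
    (π : A →⋆ₐ[ℂ] (H →L[ℂ] H)) (τ : A →⋆ₐ[ℂ] (M →L[ℂ] M)) (hτ : Function.Injective τ)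
    (S : H →L[ℂ] M) (C : H →L[ℂ] H) (hSC : adjoint S ∘L S + adjoint C ∘L C = 1)
    (ξ : M) (hξ : ‖ξ‖ = 1)
    (hg : ∀ g ∈ G, π g = adjoint S ∘L τ g ∘L S + inner ℂ ξ (τ g ξ) • (adjoint C ∘L C)) (a : A) :
    π a = adjoint S ∘L τ a ∘L S + inner ℂ ξ (τ a ξ) • (adjoint C ∘L C) := by
  obtain ⟨Z, i, j, hii, hjj, hij, hji, hsum⟩ := exists_directSum H M
  obtain ⟨ζ, hζ⟩ := exists_directSum_rep hii hjj hij hji hsum π τ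
  have hii' (x) : adjoint i (i x) = x := congrArg (· x) hii
  have hjj' (x) : adjoint j (j x) = x := congrArg (· x) hjj
  have hij' (x) : adjoint i (j x) = 0 := congrArg (· x) hij
  have hji' (x) : adjoint j (i x) = 0 := congrArg (· x) hji
  have hsum' (x) : i (adjoint i x) + j (adjoint j x) = x := congrArg (· x) hsum
  have hSC' (x) : adjoint S (S x) + adjoint C (C x) = x := congrArg (· x) hSC
  have hζinj : Function.Injective ζ := by
    intro a b hab
    apply hτ
    ext x
    have := congrArg (fun T : Z.carrier →L[ℂ] Z.carrier => adjoint j (T (j x))) hab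
    simpa [hζ, hjj', hij', hji'] using this
  -- `P` compresses to the summand `M`; `V` and `c` let `S` and `C` act from the summand `H`.
  let P : Z.carrier →L[ℂ] Z.carrier := j ∘L adjoint j
  let V : Z.carrier →L[ℂ] Z.carrier := j ∘L S ∘L adjoint i
  let c : Z.carrier →L[ℂ] Z.carrier := i ∘L C ∘L adjoint i
  let Ψ : (Z.carrier →L[ℂ] Z.carrier) →ₗ[ℂ] (Z.carrier →L[ℂ] Z.carrier) :=
    { toFun := fun T => star P * T * P + star V * T * V + inner ℂ (j ξ) (T (j ξ)) • (star c * c)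
      map_add' := fun T U => by
        simp only [mul_add, add_mul, add_apply, inner_add_right, add_smul]
        abel
      map_smul' := fun r T => by
        simp [smul_smul] }
  have hP : star P = j ∘L adjoint j := by
    simp [P, star_eq_adjoint, adjoint_comp]
  have hV : star V = i ∘L adjoint S ∘L adjoint j := by
    simp [V, star_eq_adjoint, adjoint_comp, ContinuousLinearMap.comp_assoc]
  have hc : star c = i ∘L adjoint C ∘L adjoint i := by
    simp [c, star_eq_adjoint, adjoint_comp, ContinuousLinearMap.comp_assoc]
  have hΨ (T) : Ψ T =
      star P * T * P + star V * T * V + inner ℂ (j ξ) (T (j ξ)) • (star c * c) := rfl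
  have hinner (x y) : inner ℂ (j x) (j y) = inner ℂ x y := by
    rw [← adjoint_inner_right, hjj']
  have hΨcp : IsCompletelyPositive Ψ :=
    ((isCompletelyPositive_conj P).add (isCompletelyPositive_conj V)).add
      (isCompletelyPositive_vector (j ξ) c)
  have hΨ1 : Ψ 1 = 1 := by
    rw [hΨ, hP, hV, hc]
    ext x
    have h1 : inner ℂ ξ ξ = (1 : ℂ) := by simp [hξ]
    have h2 := hSC' (adjoint i x)
    have h3 := hsum' x
    have h4 (y : Z.carrier) : (1 : Z.carrier →L[ℂ] Z.carrier) y = y := rfl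
    simp only [P, V, c, add_apply, mul_apply_eq_comp, comp_apply, h4, hjj', hii',
      hinner, h1, one_smul]
    rw [add_assoc, ← map_add, h2, add_comm, h3]
  have hΨζ (a : A) : Ψ (ζ a) = j ∘L τ a ∘L adjoint j +
      i ∘L (adjoint S ∘L τ a ∘L S + inner ℂ ξ (τ a ξ) • (adjoint C ∘L C)) ∘L adjoint i := by
    rw [hΨ, hP, hV, hc, hζ]
    ext x
    simp [P, V, c, hjj', hii', hij', hinner, add_assoc]
  have key := hG.2.2 Z ζ hζinj (fun _ => Ψ) (fun _ => ⟨hΨcp, hΨ1⟩) ?_ a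
  · have h0 : ‖Ψ (ζ a) - ζ a‖ = 0 := tendsto_const_nhds_iff.mp key
    rw [norm_eq_zero, sub_eq_zero, hΨζ, hζ] at h0
    ext x
    have := congrArg (fun T : Z.carrier →L[ℂ] Z.carrier => adjoint i (T (i x))) h0
    simpa [hii', hij', hji'] using this.symm
  · intro g hgG
    have : Ψ (ζ g) = ζ g := by rw [hΨζ, hζ, ← hg g hgG, add_comm]
    simp [this]

/-! ### Separable representations -/

/-- A hyperrigid set is countable and generates `A`, so `A` is separable. -/
theorem Hyperrigid.separableSpace {A : Type*} [CStarAlgebra A] {G : Set A} (hG : Hyperrigid G) :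
    TopologicalSpace.SeparableSpace A := by
  have hc : (G ∪ star G).Countable :=
    hG.1.union (hG.1.preimage star_injective)
  have hm : (Submonoid.closure (G ∪ star G) : Set A).Countable := by
    have := hc.to_subtype
    have : Countable (FreeMonoid (G ∪ star G : Set A)) :=
      inferInstanceAs (Countable (List (G ∪ star G : Set A)))
    rw [Submonoid.closure_eq_mrange, MonoidHom.coe_mrange]
    exact Set.countable_range _
  have hs : TopologicalSpace.IsSeparable
      (Submodule.span ℂ (Submonoid.closure (G ∪ star G) : Set A) : Set A) :=
    hm.isSeparable.span
  rw [← StarAlgebra.adjoin_eq_span] at hs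
  have h := hs.closure
  have htop : closure ((StarAlgebra.adjoin ℂ G : StarSubalgebra ℂ A) : Set A) = Set.univ := by
    have := congrArg (fun S : StarSubalgebra ℂ A => (S : Set A)) hG.2.1
    simpa using this
  rw [← TopologicalSpace.isSeparable_univ_iff, ← htop]
  exact h

/-- A separable Hilbert space in any universe is isometric to one in `Type`, because a Hilbert
basis of it is countable. -/
theorem exists_sepHilbertSpace_equiv (E : Type*) [NormedAddCommGroup E] [InnerProductSpace ℂ E]
    [CompleteSpace E] [TopologicalSpace.SeparableSpace E] :
    ∃ Z : SepHilbertSpace, Nonempty (E ≃ₗᵢ[ℂ] Z.carrier) := by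
  obtain ⟨w, b, hb⟩ := exists_hilbertBasis ℂ E
  have hdist : ∀ x ∈ w, ∀ y ∈ w, x ≠ y → ‖x - y‖ ^ 2 = 2 := by
    intro x hx y hy hxy
    have ho := b.orthonormal
    rw [hb] at ho
    have h1 : ‖x‖ = 1 := ho.1 ⟨x, hx⟩
    have h2 : ‖y‖ = 1 := ho.1 ⟨y, hy⟩
    have h3 : inner ℂ x y = 0 := ho.2 (i := ⟨x, hx⟩) (j := ⟨y, hy⟩) (by simpa using hxy)
    rw [norm_sub_sq (𝕜 := ℂ), h1, h2, h3]
    norm_num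
  have hw : w.Countable := by
    refine Set.PairwiseDisjoint.countable_of_isOpen (s := fun x : E => Metric.ball x (1 / 2))
      ?_ (fun x _ => Metric.isOpen_ball) (fun x _ => ⟨x, Metric.mem_ball_self (by norm_num)⟩)
    intro x hx y hy hxy
    refine Metric.ball_disjoint_ball ?_
    have := hdist x hx y hy hxy
    rw [dist_eq_norm]
    nlinarith [norm_nonneg (x - y)]
  have := hw.to_subtype
  obtain ⟨f, hf⟩ := exists_injective_nat w
  let e := Equiv.ofInjective f hf
  have ho : Orthonormal ℂ (b ∘ e.symm) := b.orthonormal.comp _ e.symm.injective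
  let b' : HilbertBasis (Set.range f) ℂ E := HilbertBasis.mk ho (by
    rw [e.symm.surjective.range_comp]
    exact b.dense_span.ge)
  have : TopologicalSpace.SeparableSpace (lp (fun _ : Set.range f => ℂ) 2) :=
    b'.repr.surjective.denseRange.separableSpace b'.repr.continuous
  exact ⟨⟨lp (fun _ : Set.range f => ℂ) 2⟩, ⟨b'.repr⟩⟩

/-- The GNS representation with its cyclic vector, on a separable Hilbert space in `Type`. -/
theorem exists_gns {A : Type*} [CStarAlgebra A] [PartialOrder A] [StarOrderedRing A]
    [TopologicalSpace.SeparableSpace A] (f : A →ₚ[ℂ] ℂ) :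
    ∃ (Z : SepHilbertSpace) (τ : A →⋆ₐ[ℂ] (Z.carrier →L[ℂ] Z.carrier)) (ξ : Z.carrier),
      ∀ a, f a = inner ℂ ξ (τ a ξ) := by
  have hcont : Continuous f.toPreGNS := by
    obtain ⟨C, hC⟩ := PositiveLinearMap.exists_norm_apply_le f
    refine (AddMonoidHomClass.continuous_of_bound f.toPreGNS (Real.sqrt C) fun a => ?_)
    have h1 := f.preGNS_norm_def (f.toPreGNS a)
    rw [h1, ← Real.sqrt_sq (norm_nonneg a), ← Real.sqrt_mul C.coe_nonneg]
    apply Real.sqrt_le_sqrt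
    refine (Complex.re_le_norm _).trans ((hC _).trans ?_)
    rw [PositiveLinearMap.ofPreGNS_toPreGNS, CStarRing.norm_star_mul_self, sq]
  have : TopologicalSpace.SeparableSpace f.PreGNS :=
    f.toPreGNS.surjective.denseRange.separableSpace hcont
  obtain ⟨Z, ⟨e⟩⟩ := exists_sepHilbertSpace_equiv f.GNS
  let ξ : f.GNS := ((f.toPreGNS 1 : f.PreGNS) : f.GNS)
  refine ⟨Z, e.conjStarAlgEquiv.toStarAlgHom.comp f.gnsStarAlgHom, e ξ, fun a => ?_⟩
  simp [ξ, UniformSpace.Completion.inner_coe, PositiveLinearMap.preGNS_inner_def]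

/-- Hahn-Banach separation of `-x` from the closed cone of positive elements gives a real functional
that is nonnegative on the cone and positive at `x`; it is then complexified. -/
theorem exists_positive_apply_ne_zero {A : Type*} [CStarAlgebra A] [PartialOrder A]
    [StarOrderedRing A] {x : A} (hx : 0 ≤ x) (hx0 : x ≠ 0) : ∃ f : A →ₚ[ℂ] ℂ, f x ≠ 0 := by
  have hmem : -x ∉ ProperCone.positive ℝ A := by
    rw [ProperCone.mem_positive]
    intro h
    exact hx0 (le_antisymm (neg_nonneg.mp h) hx)
  obtain ⟨fr, hfr, hneg⟩ := ProperCone.hyperplane_separation_point _ hmem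
  -- Composing with the real part makes the complexification real on self-adjoint elements.
  let g : Module.Dual ℝ A := fr.toLinearMap ∘ₗ (selfAdjoint.submodule ℝ A).subtype ∘ₗ realPart
  let f : A →ₗ[ℂ] ℂ := Module.Dual.extendRCLike g
  have hf : ∀ a : A, IsSelfAdjoint a → f a = (fr a : ℂ) := by
    intro a ha
    have h1 : g a = fr a := congrArg fr ha.coe_realPart
    have h2 : g (Complex.I • a) = 0 := by
      have : realPart (Complex.I • a) = 0 := by
        rw [realPart_I_smul, ha.imaginaryPart, neg_zero]
      change fr (realPart (Complex.I • a) : A) = 0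
      simp [this]
    change Module.Dual.extendRCLike g a = _
    rw [Module.Dual.extendRCLike_apply]
    simp [h1, h2]
  refine ⟨PositiveLinearMap.mk₀ f fun a ha => ?_, ?_⟩
  · rw [hf a (IsSelfAdjoint.of_nonneg ha)]
    exact_mod_cast hfr a (by simpa using ha)
  · change f x ≠ 0
    rw [hf x (IsSelfAdjoint.of_nonneg hx)]
    rw [map_neg] at hneg
    exact_mod_cast (neg_lt_zero.mp hneg).ne'

/-- Countably many positive functionals detect all nonzero positive elements, by the Lindelöf
property; a rapidly converging weighted sum of them is faithful. -/
theorem exists_faithful_positive (A : Type*) [CStarAlgebra A] [PartialOrder A]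
    [StarOrderedRing A] [TopologicalSpace.SeparableSpace A] :
    ∃ f : A →ₚ[ℂ] ℂ, ∀ x, 0 ≤ x → f x = 0 → x = 0 := by
  have : SecondCountableTopology A := UniformSpace.secondCountable_of_separable A
  obtain ⟨T, hT, hU⟩ := TopologicalSpace.isOpen_iUnion_countable
    (fun f : A →ₚ[ℂ] ℂ => {x | f x ≠ 0})
    (fun f => isOpen_ne_fun (map_continuous f) continuous_const)
  -- Adding the zero functional makes the family nonempty, so that a sequence enumerates it.
  obtain ⟨φ, hφ⟩ := (hT.insert 0).exists_eq_range (Set.insert_nonempty 0 T)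
  choose C hC using fun n => PositiveLinearMap.exists_norm_apply_le (φ n)
  let φc (n : ℕ) : A →L[ℂ] ℂ := (φ n).toLinearMap.mkContinuous (C n) (hC n)
  let c (n : ℕ) : ℝ := (1 / 2) ^ n / (1 + C n)
  have hc (n : ℕ) : 0 < c n := by positivity
  have hsum : Summable fun n => (c n : ℂ) • φc n := by
    refine Summable.of_norm_bounded summable_geometric_two fun n => ?_
    have h1 : ‖φc n‖ ≤ C n := LinearMap.mkContinuous_norm_le _ (C n).2 _
    have h2 : (0 : ℝ) < 1 + C n := by positivity
    rw [norm_smul, Complex.norm_real, Real.norm_of_nonneg (hc n).le, div_mul_eq_mul_div,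
      div_le_iff₀ h2]
    gcongr
    linarith
  let F : A →L[ℂ] ℂ := ∑' n, (c n : ℂ) • φc n
  have hF (a : A) : HasSum (fun n => (c n : ℂ) * φ n a) (F a) :=
    hsum.hasSum.mapL (ContinuousLinearMap.apply ℂ ℂ a)
  have hpos (a : A) (ha : 0 ≤ a) (n : ℕ) : 0 ≤ (c n : ℂ) * φ n a :=
    mul_nonneg (by exact_mod_cast (hc n).le) (map_nonneg (φ n) ha)
  refine ⟨PositiveLinearMap.mk₀ F.toLinearMap fun a ha => (hF a).nonneg (hpos a ha), ?_⟩
  intro x hx hx0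
  have hz : ∀ n, φ n x = 0 := by
    intro n
    have h0 : F x = 0 := hx0
    have h1 := (hF x)
    rw [h0] at h1
    have h2 := congrFun ((hasSum_zero_iff_of_nonneg (hpos x hx)).mp h1) n
    exact (mul_eq_zero.mp h2).resolve_left (by exact_mod_cast (hc n).ne')
  by_contra hne
  obtain ⟨f, hf⟩ := exists_positive_apply_ne_zero hx hne
  have : x ∈ ⋃ f ∈ T, {x | (f : A →ₚ[ℂ] ℂ) x ≠ 0} := by
    rw [hU]
    exact Set.mem_iUnion.mpr ⟨f, hf⟩
  simp only [Set.mem_iUnion] at this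
  obtain ⟨f', hf'T, hf'⟩ := this
  have : f' ∈ Set.range φ := hφ ▸ Set.mem_insert_of_mem 0 hf'T
  obtain ⟨n, rfl⟩ := this
  exact hf' (hz n)

theorem exists_faithful_rep (A : Type*) [CStarAlgebra A] [PartialOrder A] [StarOrderedRing A]
    [TopologicalSpace.SeparableSpace A] :
    ∃ (Z : SepHilbertSpace) (τ : A →⋆ₐ[ℂ] (Z.carrier →L[ℂ] Z.carrier)), Function.Injective τ := by
  obtain ⟨f, hf⟩ := exists_faithful_positive A
  obtain ⟨Z, τ, ξ, h⟩ := exists_gns f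
  refine ⟨Z, τ, (injective_iff_map_eq_zero τ).mpr fun a ha => ?_⟩
  have : f (star a * a) = 0 := by simp [h, ha]
  exact CStarRing.star_mul_self_eq_zero_iff a |>.mp (hf _ (star_mul_self_nonneg a) this)

/-! ### States vanishing on `G` -/

/-- A linear functional that is nonnegative on every `a* a`, bundled as a positive linear map, so
that the GNS construction applies to it. -/
def toPositiveLinearMap {A : Type*} [CStarAlgebra A] [PartialOrder A] [StarOrderedRing A]
    {φ : A →ₗ[ℂ] ℂ} (hφ : ∀ a : A, 0 ≤ φ (star a * a)) : A →ₚ[ℂ] ℂ :=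
  PositiveLinearMap.mk₀ φ fun x hx => by
    obtain ⟨y, rfl⟩ := CStarAlgebra.nonneg_iff_eq_star_mul_self.mp hx
    exact hφ y

theorem exists_vector {A : Type*} [CStarAlgebra A] [TopologicalSpace.SeparableSpace A]
    {φ : A →ₗ[ℂ] ℂ} (hφ : ∀ a : A, 0 ≤ φ (star a * a)) :
    ∃ (Z : SepHilbertSpace) (τ : A →⋆ₐ[ℂ] (Z.carrier →L[ℂ] Z.carrier)) (ξ : Z.carrier),
      ∀ a, φ a = inner ℂ ξ (τ a ξ) := by
  let := CStarAlgebra.spectralOrder A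
  have := CStarAlgebra.spectralOrderedRing A
  exact exists_gns (toPositiveLinearMap hφ)

/-- Any state is a vector state of some faithful separable representation containing a given
representation `ρ`. -/
theorem exists_faithful_containing {A : Type*} [CStarAlgebra A] [TopologicalSpace.SeparableSpace A]
    {K : Type} [NormedAddCommGroup K] [InnerProductSpace ℂ K] [CompleteSpace K]
    [TopologicalSpace.SeparableSpace K] (ρ : A →⋆ₐ[ℂ] (K →L[ℂ] K))
    {φ : A →ₗ[ℂ] ℂ} (hφ : IsStateLF φ) :
    ∃ (M : SepHilbertSpace) (τ : A →⋆ₐ[ℂ] (M.carrier →L[ℂ] M.carrier)) (i : K →L[ℂ] M.carrier)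
      (ξ : M.carrier), Function.Injective τ ∧ adjoint i ∘L i = 1 ∧
      (∀ a, adjoint i ∘L τ a ∘L i = ρ a) ∧ ‖ξ‖ = 1 ∧ ∀ a, φ a = inner ℂ ξ (τ a ξ) := by
  obtain ⟨E, σ, η, hη⟩ := exists_vector hφ.2
  obtain ⟨F, υ, hυ⟩ : ∃ (Z : SepHilbertSpace) (τ : A →⋆ₐ[ℂ] (Z.carrier →L[ℂ] Z.carrier)),
      Function.Injective τ := by
    let := CStarAlgebra.spectralOrder A
    have := CStarAlgebra.spectralOrderedRing A
    exact exists_faithful_rep A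
  obtain ⟨N, k, l, hkk, hll, hkl, hlk, hN⟩ := exists_directSum E.carrier F.carrier
  obtain ⟨ω, hω⟩ := exists_directSum_rep hkk hll hkl hlk hN σ υ
  obtain ⟨M, i, j, hii, hjj, hij, hji, hM⟩ := exists_directSum K N.carrier
  obtain ⟨τ, hτ⟩ := exists_directSum_rep hii hjj hij hji hM ρ ω
  have hkk' (x) : adjoint k (k x) = x := congrArg (· x) hkk
  have hll' (x) : adjoint l (l x) = x := congrArg (· x) hll
  have hkl' (x) : adjoint k (l x) = 0 := congrArg (· x) hkl
  have hlk' (x) : adjoint l (k x) = 0 := congrArg (· x) hlk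
  have hii' (x) : adjoint i (i x) = x := congrArg (· x) hii
  have hjj' (x) : adjoint j (j x) = x := congrArg (· x) hjj
  have hij' (x) : adjoint i (j x) = 0 := congrArg (· x) hij
  have hji' (x) : adjoint j (i x) = 0 := congrArg (· x) hji
  have hvec (a : A) : φ a = inner ℂ (j (k η)) (τ a (j (k η))) := by
    rw [← adjoint_inner_right, ← adjoint_inner_right, hη]
    simp [hτ, hω, hjj', hij', hkk', hlk']
  refine ⟨M, τ, i, j (k η), ?_, hii, ?_, ?_, hvec⟩
  · intro a b hab
    apply hυ
    ext x
    have := congrArg (fun T : M.carrier →L[ℂ] M.carrier => adjoint l (adjoint j (T (j (l x))))) hab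
    simpa [hτ, hω, hjj', hij', hkl', hll'] using this
  · intro a
    ext x
    simp [hτ, hii', hji']
  · have h1 := hvec 1
    rw [hφ.1, map_one] at h1
    have h2 : (‖j (k η)‖ : ℂ) ^ 2 = 1 := by
      exact (inner_self_eq_norm_sq_to_K (𝕜 := ℂ) (j (k η))).symm.trans h1.symm
    have h3 : ‖j (k η)‖ ^ 2 = 1 := by exact_mod_cast h2
    exact (pow_eq_one_iff_of_nonneg (norm_nonneg _) two_ne_zero).mp h3

/-- If `φ` is a state vanishing on `G`, the completely positive map
`a ↦ R* ρ(a) R + φ(a) (1 - R* R)` is unital and agrees with `π` on `G`, hence everywhere. -/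
theorem Hyperrigid.eq_add_smul {A : Type*} [CStarAlgebra A] {G : Set A} (hG : Hyperrigid G)
    {H K : Type} [NormedAddCommGroup H] [InnerProductSpace ℂ H] [CompleteSpace H]
    [TopologicalSpace.SeparableSpace H]
    [NormedAddCommGroup K] [InnerProductSpace ℂ K] [CompleteSpace K]
    [TopologicalSpace.SeparableSpace K]
    (π : A →⋆ₐ[ℂ] (H →L[ℂ] H)) (ρ : A →⋆ₐ[ℂ] (K →L[ℂ] K)) (R : H →L[ℂ] K) (hR : ‖R‖ ≤ 1)
    (hdil : ∀ g ∈ G, π g = adjoint R ∘L ρ g ∘L R)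
    {φ : A →ₗ[ℂ] ℂ} (hφ : IsStateLF φ) (hφG : ∀ g ∈ G, φ g = 0) (a : A) :
    π a = adjoint R ∘L ρ a ∘L R + φ a • (1 - adjoint R ∘L R) := by
  have := hG.separableSpace
  obtain ⟨M, τ, i, ξ, hτ, hii, hi, hξ, hvec⟩ := exists_faithful_containing ρ hφ
  have hii' (x) : adjoint i (i x) = x := congrArg (· x) hii
  have hi' (a x) : adjoint i (τ a (i x)) = ρ a x := congrArg (· x) (hi a)
  have hD : 0 ≤ 1 - adjoint R ∘L R := by
    rw [ContinuousLinearMap.nonneg_iff_isPositive, ContinuousLinearMap.isPositive_iff_complex]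
    intro x
    have h1 : ‖R x‖ ≤ ‖x‖ := (R.le_of_opNorm_le hR x).trans_eq (one_mul _)
    have h2 : inner ℂ ((1 - adjoint R ∘L R) x) x = ((‖x‖ ^ 2 - ‖R x‖ ^ 2 : ℝ) : ℂ) := by
      have hn2 := inner_self_eq_norm_sq_to_K (𝕜 := ℂ) (R x)
      have hn3 := inner_self_eq_norm_sq_to_K (𝕜 := ℂ) x
      simp only [Complex.coe_algebraMap] at hn2 hn3
      push_cast
      rw [← hn2, ← hn3]
      simp [adjoint_inner_left]
    rw [h2, RCLike.re_eq_complex_re, Complex.ofReal_re, sub_nonneg]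
    refine ⟨rfl, ?_⟩
    gcongr
  obtain ⟨C, hC⟩ := CStarAlgebra.nonneg_iff_eq_star_mul_self.mp hD
  have hC' : adjoint C ∘L C = 1 - adjoint R ∘L R := hC.symm
  have hS (a : A) : adjoint (i ∘L R) ∘L τ a ∘L (i ∘L R) = adjoint R ∘L ρ a ∘L R := by
    ext x
    simp [adjoint_comp, hi']
  have hSS : adjoint (i ∘L R) ∘L (i ∘L R) = adjoint R ∘L R := by
    ext x
    simp [adjoint_comp, hii']
  have key := hG.eq_of_eqOn π τ hτ (i ∘L R) C (by rw [hSS, hC']; abel) ξ hξ (fun g hg => by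
    rw [hS, ← hvec, hφG g hg, zero_smul, add_zero, hdil g hg]) a
  rw [key, hS, hC', ← hvec]

/-- By the decomposition `Hyperrigid.eq_add_smul`, a defect of `R` at some vector together with the
multiplicativity of `π` forces `φ(b* b) = 0` whenever `φ(b) = 0`; the left kernel of `φ` is then all
of `ker φ`, which makes `φ` multiplicative. -/
theorem Hyperrigid.isCharacterLF {A : Type*} [CStarAlgebra A] {G : Set A} (hG : Hyperrigid G)
    {H K : Type} [NormedAddCommGroup H] [InnerProductSpace ℂ H] [CompleteSpace H]
    [TopologicalSpace.SeparableSpace H]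
    [NormedAddCommGroup K] [InnerProductSpace ℂ K] [CompleteSpace K]
    [TopologicalSpace.SeparableSpace K]
    (π : A →⋆ₐ[ℂ] (H →L[ℂ] H)) (ρ : A →⋆ₐ[ℂ] (K →L[ℂ] K)) (R : H →L[ℂ] K) (hR : ‖R‖ ≤ 1)
    (hRni : adjoint R ∘L R ≠ 1)
    (hdil : ∀ g ∈ G, π g = adjoint R ∘L ρ g ∘L R)
    {φ : A →ₗ[ℂ] ℂ} (hφ : IsStateLF φ) (hφG : ∀ g ∈ G, φ g = 0) : IsCharacterLF φ := by
  have hsep := hG.separableSpace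
  have hdec := hG.eq_add_smul π ρ R hR hdil hφ hφG
  obtain ⟨h, hh⟩ : ∃ h, ‖R h‖ < ‖h‖ := by
    by_contra! hcon
    refine hRni (norm_map_iff_adjoint_comp_self R |>.mp fun x => le_antisymm ?_ (hcon x))
    exact (R.le_of_opNorm_le hR x).trans_eq (one_mul _)
  -- Comparing `π(b* b)` with `π(b)* π(b)` at `h` forces `φ(b* b) = 0`.
  have hzero (b : A) (hb : φ b = 0) : φ (star b * b) = 0 := by
    have hπb : π b h = adjoint R (ρ b (R h)) := by
      have := congrArg (· h) (hdec b)
      simpa [hb] using this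
    have h1 : inner ℂ h (π (star b * b) h) = (‖π b h‖ : ℂ) ^ 2 := by
      rw [map_mul, map_star, mul_apply_eq_comp, star_eq_adjoint, adjoint_inner_right]
      exact inner_self_eq_norm_sq_to_K (𝕜 := ℂ) _
    have h2 : inner ℂ h (π (star b * b) h) =
        (‖ρ b (R h)‖ : ℂ) ^ 2 + φ (star b * b) * ((‖h‖ : ℂ) ^ 2 - (‖R h‖ : ℂ) ^ 2) := by
      have hn1 := inner_self_eq_norm_sq_to_K (𝕜 := ℂ) (ρ b (R h))
      have hn2 := inner_self_eq_norm_sq_to_K (𝕜 := ℂ) (R h)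
      have hn3 := inner_self_eq_norm_sq_to_K (𝕜 := ℂ) h
      simp only [Complex.coe_algebraMap] at hn1 hn2 hn3
      rw [hdec, ← hn1, ← hn2, ← hn3]
      simp [map_mul, map_star, star_eq_adjoint, adjoint_inner_right]
    have h3 : ‖π b h‖ ≤ ‖ρ b (R h)‖ := by
      rw [hπb]
      refine ((adjoint R).le_of_opNorm_le ?_ _).trans_eq (one_mul _)
      rwa [LinearIsometryEquiv.norm_map]
    obtain ⟨r, hr0, hr⟩ : ∃ r : ℝ, 0 ≤ r ∧ φ (star b * b) = r := by
      have := hφ.2 b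
      refine ⟨(φ (star b * b)).re, (Complex.nonneg_iff.mp this).1, ?_⟩
      exact Complex.eq_re_of_ofReal_le this
    rw [h1, hr] at h2
    have h4 : ‖π b h‖ ^ 2 = ‖ρ b (R h)‖ ^ 2 + r * (‖h‖ ^ 2 - ‖R h‖ ^ 2) := by exact_mod_cast h2
    have h5 : ‖π b h‖ ^ 2 ≤ ‖ρ b (R h)‖ ^ 2 := by gcongr
    have h6 : 0 < ‖h‖ ^ 2 - ‖R h‖ ^ 2 := by
      have := norm_nonneg (R h)
      nlinarith
    have h7 : r = 0 := by nlinarith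
    rw [hr, h7, Complex.ofReal_zero]
  obtain ⟨Z, τ, ξ, hvec⟩ := exists_vector hφ.2
  refine ⟨fun h0 => by simpa [h0] using hφ.1, fun c a => ?_⟩
  have hb : φ (a - φ a • 1) = 0 := by simp [hφ.1]
  have hτ : τ (a - φ a • 1) ξ = 0 := by
    have h1 := hzero _ hb
    rw [hvec, map_mul, map_star, mul_apply_eq_comp, star_eq_adjoint, adjoint_inner_right] at h1
    exact inner_self_eq_zero.mp h1
  have h2 : φ (c * (a - φ a • 1)) = 0 := by
    rw [hvec, map_mul, mul_apply_eq_comp, hτ, map_zero, inner_zero_right]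
  rw [mul_sub, map_sub, mul_smul_comm, mul_one, map_smul, sub_eq_zero] at h2
  rw [h2, smul_eq_mul, mul_comm]

/-- A weak* cluster point of functionals violating rigidity at zero is a nonzero positive
functional annihilating `G`; normalized, it is a state. -/
theorem exists_state_of_not_rigidAtZero {A : Type*} [CStarAlgebra A]
    [TopologicalSpace.SeparableSpace A] {G : Set A} (hG : ¬ RigidAtZero G) :
    ∃ φ : A →ₗ[ℂ] ℂ, IsStateLF φ ∧ ∀ g ∈ G, φ g = 0 := by
  simp only [RigidAtZero, not_forall] at hG
  obtain ⟨ψ, hψ, hψG, a, ha⟩ := hG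
  obtain ⟨ε, hε, hfreq⟩ : ∃ ε > 0, ∃ᶠ n in atTop, ε ≤ ‖ψ n a‖ := by
    by_contra! hcon
    refine ha (Metric.tendsto_nhds.mpr fun ε hε => ?_)
    simpa using hcon ε hε
  have hne : (atTop ⊓ 𝓟 {n | ε ≤ ‖ψ n a‖}).NeBot := frequently_iff_neBot.mp hfreq
  let U : Ultrafilter ℕ := Ultrafilter.of (atTop ⊓ 𝓟 {n | ε ≤ ‖ψ n a‖})
  have hU : (U : Filter ℕ) ≤ atTop ⊓ 𝓟 {n | ε ≤ ‖ψ n a‖} := Ultrafilter.of_le _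
  have hlim (b : A) : ∃ z : ℂ, Tendsto (fun n => ψ n b) U (𝓝 z) := by
    obtain ⟨z, -, hz⟩ := (isCompact_closedBall (0 : ℂ) ‖b‖).ultrafilter_le_nhds
      (U.map fun n => ψ n b) (le_principal_iff.mpr (mem_map.mpr (univ_mem' fun n => by
        simpa using (hψ n).1 b)))
    exact ⟨z, hz⟩
  choose Λ hΛ using hlim
  let L : A →ₗ[ℂ] ℂ :=
    { toFun := Λ
      map_add' := fun x y => tendsto_nhds_unique (hΛ (x + y)) (by
        simpa using (hΛ x).add (hΛ y))
      map_smul' := fun c x => tendsto_nhds_unique (hΛ (c • x)) (by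
        simpa using (hΛ x).const_mul c) }
  have hpos (b : A) : 0 ≤ L (star b * b) :=
    ge_of_tendsto' (hΛ (star b * b)) fun n => (hψ n).2 b
  have hLG (g) (hg : g ∈ G) : L g = 0 :=
    tendsto_nhds_unique (hΛ g) ((hψG g hg).mono_left (hU.trans inf_le_left))
  have hLa : ε ≤ ‖L a‖ := by
    refine ge_of_tendsto (hΛ a).norm ?_
    exact hU (mem_inf_of_right (mem_principal_self _))
  -- If `L 1 = 0`, the GNS vector of `L` vanishes, and so does `L`.
  have hL1 : L 1 ≠ 0 := by
    intro h0
    obtain ⟨Z, τ, ξ, hvec⟩ := exists_vector hpos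
    have hξ : ξ = 0 := by
      rw [hvec, map_one] at h0
      exact inner_self_eq_zero.mp h0
    have : L a = 0 := by rw [hvec, hξ, inner_zero_left]
    rw [this, norm_zero] at hLa
    exact absurd hε hLa.not_gt
  refine ⟨(L 1)⁻¹ • L, ⟨by simp [hL1], fun b => ?_⟩, fun g hg => by simp [hLG g hg]⟩
  have h1 : 0 ≤ L 1 := by simpa using hpos 1
  exact mul_nonneg (inv_nonneg.mpr h1) (hpos b)

theorem IsCharacterLF.not_rigidAtZero {A : Type*} [CStarAlgebra A] {G : Set A} {χ : A →ₗ[ℂ] ℂ}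
    (hχ : IsCharacterLF χ) (hχG : ∀ g ∈ G, χ g = 0) : ¬ RigidAtZero G := by
  intro hrig
  have h1 : χ 1 = 1 := by
    obtain ⟨a, ha⟩ : ∃ a, χ a ≠ 0 := by
      by_contra! hcon
      exact hχ.1 (LinearMap.ext hcon)
    have := hχ.2 a 1
    rw [mul_one] at this
    exact (mul_eq_left₀ ha).mp this.symm
  let f : A →ₐ[ℂ] ℂ := AlgHom.ofLinearMap χ h1 hχ.2
  have hstar (a : A) : χ (star a) = star (χ a) := map_star f a
  let F : A →⋆ₐ[ℂ] ℂ := ⟨f, hstar⟩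
  have hlim := hrig (fun _ => χ) (fun _ => ⟨fun a => NonUnitalStarAlgHom.norm_apply_le F a,
    fun a => by rw [hχ.2, hstar]; exact star_mul_self_nonneg (χ a)⟩)
    (fun g hg => by simp [hχG g hg]) 1
  rw [h1] at hlim
  exact one_ne_zero (tendsto_const_nhds_iff.mp hlim)

/-- rigidity at `0` versus absence of annihilating characters
(Corollary `tiply`). -/
theorem stmt_8 {A : Type*} [CStarAlgebra A] (G : Set A) (hG : Hyperrigid G)
    {H K : Type} [NormedAddCommGroup H] [InnerProductSpace ℂ H] [CompleteSpace H]
    [TopologicalSpace.SeparableSpace H]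
    [NormedAddCommGroup K] [InnerProductSpace ℂ K] [CompleteSpace K]
    [TopologicalSpace.SeparableSpace K]
    (π : A →⋆ₐ[ℂ] (H →L[ℂ] H)) (ρ : A →⋆ₐ[ℂ] (K →L[ℂ] K))
    (R : H →L[ℂ] K) (hR : ‖R‖ ≤ 1) (hRni : adjoint R ∘L R ≠ 1)
    (hdil : ∀ g ∈ G, π g = adjoint R ∘L ρ g ∘L R) :
    (RigidAtZero G ↔ ¬ ∃ χ : A →ₗ[ℂ] ℂ, IsCharacterLF χ ∧ ∀ g ∈ G, χ g = 0) ∧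
    (∀ φ₁ φ₂ : A →ₗ[ℂ] ℂ, IsStateLF φ₁ → (∀ g ∈ G, φ₁ g = 0) →
      IsStateLF φ₂ → (∀ g ∈ G, φ₂ g = 0) → φ₁ = φ₂) ∧
    (∀ φ : A →ₗ[ℂ] ℂ, IsStateLF φ → (∀ g ∈ G, φ g = 0) → IsCharacterLF φ) := by
  have hsep := hG.separableSpace
  have hchar : ∀ φ : A →ₗ[ℂ] ℂ, IsStateLF φ → (∀ g ∈ G, φ g = 0) → IsCharacterLF φ :=
    fun φ hφ hφG => hG.isCharacterLF π ρ R hR hRni hdil hφ hφG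
  refine ⟨⟨?_, ?_⟩, ?_, hchar⟩
  · rintro hrig ⟨χ, hχ, hχG⟩
    exact hχ.not_rigidAtZero hχG hrig
  · intro hno
    by_contra hrig
    obtain ⟨φ, hφ, hφG⟩ := exists_state_of_not_rigidAtZero hrig
    exact hno ⟨φ, hchar φ hφ hφG, hφG⟩
  · intro φ₁ φ₂ h₁ hG₁ h₂ hG₂
    ext a
    have e₁ := hG.eq_add_smul π ρ R hR hdil h₁ hG₁ a
    rw [hG.eq_add_smul π ρ R hR hdil h₂ hG₂ a] at e₁
    exact (smul_left_injective ℂ (sub_ne_zero.mpr hRni.symm) (add_left_cancel e₁)).symm
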